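/- Let U ⊆ ℂ be open and let h, v, w : U → ℂ be smooth. Then L_v(D_h w) − L_w(D_h v) − D_h([v,w]) = 0 on U, where L_v q = v·∂q + 2·(∂v)·q is the Lie derivative on weight-2 quantities and [v,w] = v·∂w − w·∂v is the Lie bracket of vector fields. -/

import Mathlib

/-!
Write `W i j = ∂ⁱv ∂ʲw - ∂ⁱw ∂ʲv`. By the Leibniz rule `∂(W i j) = W (i+1) j + W i (j+1)`, and
`W i i = 0`. As `[v,w] = W 0 1`, this gives `∂[v,w] = W 0 2` and `∂³[v,w] = 2 W 1 3 + W 0 4`, so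
`D_h[v,w] = 2 W 1 3 + W 0 4 + 2h W 0 2 + ∂h W 0 1`. On the other side, antisymmetrizing
`v ∂(D_h w)` yields `W 0 4 + 2h W 0 2 + 3 ∂h W 0 1`, and antisymmetrizing `2 ∂v D_h w` yields
`2 W 1 3 - 2 ∂h W 0 1`.
-/

open Complex MeasureTheory

/-- The Wirtinger derivative ∂u = (u_x − i·u_y)/2 of a function `u : ℂ → ℂ`. -/
noncomputable def wd (u : ℂ → ℂ) : ℂ → ℂ :=
  fun z => (fderiv ℝ u z 1 - Complex.I * fderiv ℝ u z Complex.I) / 2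

/-- The conjugate Wirtinger derivative ∂̄u = (u_x + i·u_y)/2. -/
noncomputable def wdbar (u : ℂ → ℂ) : ℂ → ℂ :=
  fun z => (fderiv ℝ u z 1 + Complex.I * fderiv ℝ u z Complex.I) / 2

/-- The Schwarzian derivative {f,z} = ∂³f/∂f − (3/2)·(∂²f/∂f)² of a smooth map. -/
noncomputable def schwarz (f : ℂ → ℂ) : ℂ → ℂ :=
  fun z => wd (wd (wd f)) z / wd f z - (3/2) * (wd (wd f) z / wd f z)^2

/-- The Schwarzian derivative S(g) = g'''/g' − (3/2)·(g''/g')² of a holomorphic map. -/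
noncomputable def schwarzD (g : ℂ → ℂ) : ℂ → ℂ :=
  fun z => deriv (deriv (deriv g)) z / deriv g z - (3/2) * (deriv (deriv g) z / deriv g z)^2

/-- The operator ∂̄_μ^{(k)} u = ∂̄u − μ·∂u − k·(∂μ)·u. -/
noncomputable def dbarMu (μ : ℂ → ℂ) (k : ℤ) (u : ℂ → ℂ) : ℂ → ℂ :=
  fun z => wdbar u z - μ z * wd u z - (k : ℂ) * wd μ z * u z

/-- The third-order operator D_h u = ∂³u + 2h·∂u + (∂h)·u. -/
noncomputable def Dop (h u : ℂ → ℂ) : ℂ → ℂ :=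
  fun z => wd (wd (wd u)) z + 2 * h z * wd u z + wd h z * u z

/-- The Lie derivative on weight-2 quantities: L_v q = v·∂q + 2·(∂v)·q. -/
noncomputable def lieD (v q : ℂ → ℂ) : ℂ → ℂ :=
  fun z => v z * wd q z + 2 * wd v z * q z

open scoped Topology

section Wirtinger

variable {f g : ℂ → ℂ} {z : ℂ}

theorem wd_add (hf : DifferentiableAt ℝ f z) (hg : DifferentiableAt ℝ g z) :
    wd (f + g) z = wd f z + wd g z := by
  simp only [wd, fderiv_add hf hg, add_apply]
  ring

theorem wd_sub (hf : DifferentiableAt ℝ f z) (hg : DifferentiableAt ℝ g z) :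
    wd (f - g) z = wd f z - wd g z := by
  simp only [wd, fderiv_sub hf hg, sub_apply]
  ring

theorem wd_mul (hf : DifferentiableAt ℝ f z) (hg : DifferentiableAt ℝ g z) :
    wd (f * g) z = wd f z * g z + f z * wd g z := by
  simp only [wd, fderiv_mul hf hg, add_apply, smul_apply, smul_eq_mul]
  ring

theorem wd_const_smul (c : ℂ) (f : ℂ → ℂ) (z : ℂ) : wd (c • f) z = c * wd f z := by
  simp only [wd, fderiv_const_smul_field, Pi.smul_apply, smul_apply, smul_eq_mul]
  ring

theorem wd_congr (hfg : f =ᶠ[𝓝 z] g) : wd f z = wd g z := by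
  simp only [wd, hfg.fderiv_eq]

theorem eventuallyEq_wd (hfg : f =ᶠ[𝓝 z] g) : wd f =ᶠ[𝓝 z] wd g :=
  hfg.eventuallyEq_nhds.mono fun _ => wd_congr

theorem contDiffAt_wd {m n : WithTop ℕ∞} (hf : ContDiffAt ℝ n f z) (hmn : m + 1 ≤ n) :
    ContDiffAt ℝ m (wd f) z := by
  have hf' : ContDiffAt ℝ m (fderiv ℝ f) z := hf.fderiv_right hmn
  exact ((hf'.clm_apply contDiffAt_const).sub
    (contDiffAt_const.mul (hf'.clm_apply contDiffAt_const))).div_const 2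

theorem contDiffAt_iterate_wd {m k : ℕ} (hf : ContDiffAt ℝ (m + k : ℕ) f z) :
    ContDiffAt ℝ m (wd^[k] f) z := by
  induction k generalizing f with
  | zero => exact hf
  | succ k ih => exact ih (contDiffAt_wd hf (by norm_cast))

theorem differentiableAt_iterate_wd {n k : ℕ} (hf : ContDiffAt ℝ n f z) (hk : k < n) :
    DifferentiableAt ℝ (wd^[k] f) z := by
  have hf' : ContDiffAt ℝ (1 + k : ℕ) f z := hf.of_le (by norm_cast; lia)
  exact (contDiffAt_iterate_wd hf').differentiableAt (by simp)

end Wirtinger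

/-- The bilinear Wronskian `∂ⁱv ∂ʲw - ∂ⁱw ∂ʲv`; the Lie bracket `[v,w]` is the case `i = 0`,
`j = 1`. It is used to organize the derivatives of `[v,w]`. -/
noncomputable def wdWronskian (i j : ℕ) (v w : ℂ → ℂ) : ℂ → ℂ :=
  wd^[i] v * wd^[j] w - wd^[i] w * wd^[j] v

section Wronskian

variable {v w : ℂ → ℂ} {z : ℂ} {n i j : ℕ}

theorem wdWronskian_self (i : ℕ) (v w : ℂ → ℂ) : wdWronskian i i v w = 0 := by
  rw [wdWronskian, mul_comm, sub_self]

theorem differentiableAt_wdWronskian (hv : ContDiffAt ℝ n v z) (hw : ContDiffAt ℝ n w z)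
    (hi : i < n) (hj : j < n) : DifferentiableAt ℝ (wdWronskian i j v w) z :=
  ((differentiableAt_iterate_wd hv hi).mul (differentiableAt_iterate_wd hw hj)).sub
    ((differentiableAt_iterate_wd hw hi).mul (differentiableAt_iterate_wd hv hj))

theorem wd_wdWronskian (hv : ContDiffAt ℝ n v z) (hw : ContDiffAt ℝ n w z)
    (hi : i < n) (hj : j < n) :
    wd (wdWronskian i j v w) z = wdWronskian (i + 1) j v w z + wdWronskian i (j + 1) v w z := by
  have hvi := differentiableAt_iterate_wd hv hi
  have hvj := differentiableAt_iterate_wd hv hj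
  have hwi := differentiableAt_iterate_wd hw hi
  have hwj := differentiableAt_iterate_wd hw hj
  simp only [wdWronskian, wd_sub (hvi.mul hwj) (hwi.mul hvj), wd_mul hvi hwj, wd_mul hwi hvj,
    Function.iterate_succ_apply', Pi.sub_apply, Pi.mul_apply]
  ring

theorem eventuallyEq_wd_wdWronskian (hv : ContDiffAt ℝ n v z) (hw : ContDiffAt ℝ n w z)
    (hi : i < n) (hj : j < n) :
    wd (wdWronskian i j v w) =ᶠ[𝓝 z] wdWronskian (i + 1) j v w + wdWronskian i (j + 1) v w := by
  filter_upwards [hv.eventually (by simp), hw.eventually (by simp)] with x hvx hwx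
  exact wd_wdWronskian hvx hwx hi hj

theorem eventuallyEq_wd_wdWronskian_zero_one (hv : ContDiffAt ℝ 2 v z) (hw : ContDiffAt ℝ 2 w z) :
    wd (wdWronskian 0 1 v w) =ᶠ[𝓝 z] wdWronskian 0 2 v w := by
  simpa only [zero_add, wdWronskian_self] using
    eventuallyEq_wd_wdWronskian (n := 2) hv hw (i := 0) (j := 1) (by simp) (by simp)

theorem wd_wd_wd_wdWronskian_zero_one (hv : ContDiffAt ℝ 4 v z) (hw : ContDiffAt ℝ 4 w z) :
    wd (wd (wd (wdWronskian 0 1 v w))) z = 2 * wdWronskian 1 3 v w z + wdWronskian 0 4 v w z := by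
  have h_one : wd (wdWronskian 0 1 v w) =ᶠ[𝓝 z] wdWronskian 0 2 v w :=
    eventuallyEq_wd_wdWronskian_zero_one (hv.of_le (by norm_num)) (hw.of_le (by norm_num))
  have h_two : wd (wd (wdWronskian 0 1 v w)) =ᶠ[𝓝 z] wdWronskian 1 2 v w + wdWronskian 0 3 v w :=
    (eventuallyEq_wd h_one).trans <|
      eventuallyEq_wd_wdWronskian (n := 4) hv hw (by simp) (by simp)
  calc wd (wd (wd (wdWronskian 0 1 v w))) z
      = wd (wdWronskian 1 2 v w + wdWronskian 0 3 v w) z := wd_congr h_two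
    _ = wd (wdWronskian 1 2 v w) z + wd (wdWronskian 0 3 v w) z :=
        wd_add (differentiableAt_wdWronskian (n := 4) hv hw (by simp) (by simp))
          (differentiableAt_wdWronskian (n := 4) hv hw (by simp) (by simp))
    _ = (wdWronskian 2 2 v w z + wdWronskian 1 3 v w z)
          + (wdWronskian 1 3 v w z + wdWronskian 0 4 v w z) := by
        rw [wd_wdWronskian (n := 4) hv hw (by simp) (by simp),
          wd_wdWronskian (n := 4) hv hw (by simp) (by simp)]
    _ = 2 * wdWronskian 1 3 v w z + wdWronskian 0 4 v w z := by
        rw [wdWronskian_self, Pi.zero_apply]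
        ring

end Wronskian

section ThirdOrderOperator

variable {h u v w : ℂ → ℂ} {z : ℂ}

theorem Dop_wdWronskian_zero_one (h : ℂ → ℂ) (hv : ContDiffAt ℝ 4 v z)
    (hw : ContDiffAt ℝ 4 w z) :
    Dop h (wdWronskian 0 1 v w) z = 2 * wdWronskian 1 3 v w z + wdWronskian 0 4 v w z
      + 2 * h z * wdWronskian 0 2 v w z + wd h z * wdWronskian 0 1 v w z := by
  have h_one : wd (wdWronskian 0 1 v w) z = wdWronskian 0 2 v w z :=
    (eventuallyEq_wd_wdWronskian_zero_one (hv.of_le (by norm_num))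
      (hw.of_le (by norm_num))).eq_of_nhds
  rw [Dop, wd_wd_wd_wdWronskian_zero_one hv hw, h_one]

theorem wd_Dop (hh : ContDiffAt ℝ 2 h z) (hu : ContDiffAt ℝ 4 u z) :
    wd (Dop h u) z = wd^[4] u z + 2 * h z * wd^[2] u z + 3 * wd h z * wd u z
      + wd^[2] h z * u z := by
  have hu₀ : DifferentiableAt ℝ u z := hu.differentiableAt (by simp)
  have hu₁ : DifferentiableAt ℝ (wd u) z :=
    differentiableAt_iterate_wd (n := 4) (k := 1) hu (by simp)
  have hu₃ : DifferentiableAt ℝ (wd^[3] u) z :=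
    differentiableAt_iterate_wd (n := 4) hu (by simp)
  have hh₀ : DifferentiableAt ℝ h z := hh.differentiableAt (by simp)
  have hh₁ : DifferentiableAt ℝ (wd h) z :=
    differentiableAt_iterate_wd (n := 2) (k := 1) hh (by simp)
  have hh₂ : DifferentiableAt ℝ ((2 : ℂ) • h) z := hh₀.const_smul 2
  calc wd (Dop h u) z
      = wd (wd^[3] u + ((2 : ℂ) • h) * wd u + wd h * u) z := rfl
    _ = wd (wd^[3] u) z + (2 * wd h z * wd u z + 2 * h z * wd (wd u) z)
          + (wd (wd h) z * u z + wd h z * wd u z) := by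
        rw [wd_add (hu₃.add (hh₂.mul hu₁)) (hh₁.mul hu₀), wd_add hu₃ (hh₂.mul hu₁),
          wd_mul hh₂ hu₁, wd_mul hh₁ hu₀, wd_const_smul, Pi.smul_apply, smul_eq_mul]
    _ = wd^[4] u z + 2 * h z * wd^[2] u z + 3 * wd h z * wd u z + wd^[2] h z * u z := by
        simp only [Function.iterate_succ_apply', Function.iterate_zero_apply]
        ring

theorem lieD_Dop_sub_lieD_Dop (hh : ContDiffAt ℝ 2 h z) (hv : ContDiffAt ℝ 4 v z)
    (hw : ContDiffAt ℝ 4 w z) :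
    lieD v (Dop h w) z - lieD w (Dop h v) z
      = 2 * wdWronskian 1 3 v w z + wdWronskian 0 4 v w z
        + 2 * h z * wdWronskian 0 2 v w z + wd h z * wdWronskian 0 1 v w z := by
  simp only [lieD, wd_Dop hh hw, wd_Dop hh hv, Dop, wdWronskian, Pi.sub_apply, Pi.mul_apply,
    Function.iterate_succ_apply', Function.iterate_zero_apply]
  ring

end ThirdOrderOperator

theorem stmt4_general (h v w : ℂ → ℂ) (z : ℂ) (hh : ContDiffAt ℝ 2 h z)
    (hv : ContDiffAt ℝ 4 v z) (hw : ContDiffAt ℝ 4 w z) :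
    lieD v (Dop h w) z - lieD w (Dop h v) z
      - Dop h (fun x => v x * wd w x - w x * wd v x) z = 0 :=
  sub_eq_zero.mpr <|
    (lieD_Dop_sub_lieD_Dop hh hv hw).trans (Dop_wdWronskian_zero_one h hv hw).symm

/-- `L_v(D_h w) − L_w(D_h v) − D_h([v,w]) = 0` on `U`. -/
theorem stmt4 (U : Set ℂ) (hU : IsOpen U) (h v w : ℂ → ℂ)
    (hh : ContDiffOn ℝ (⊤ : ℕ∞) h U) (hv : ContDiffOn ℝ (⊤ : ℕ∞) v U) (hw : ContDiffOn ℝ (⊤ : ℕ∞) w U) :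
    ∀ z ∈ U,
      lieD v (Dop h w) z - lieD w (Dop h v) z
        - Dop h (fun x => v x * wd w x - w x * wd v x) z = 0 := by
  intro z hz
  have hUz : U ∈ 𝓝 z := hU.mem_nhds hz
  exact stmt4_general h v w z (contDiffAt_infty.mp (hh.contDiffAt hUz) 2)
    (contDiffAt_infty.mp (hv.contDiffAt hUz) 4) (contDiffAt_infty.mp (hw.contDiffAt hUz) 4)
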